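/- Let W be the group of ℤ-linear automorphisms g of V = (Fin 7 → ℤ) satisfying ⟨g x, g y⟩ = ⟨x, y⟩ for all x, y ∈ V and g K = K. Every element of W maps lines to lines, so W acts ℚ-linearly on the ℚ-vector space 𝒱 of functions from the set of lines to ℚ by (g ⬝ v)(L) = v(g⁻¹ L). Then there exist W-invariant subspaces U₁, U₂, U₃ of 𝒱 of dimensions 1, 6 and 20 respectively, such that 𝒱 is the internal direct sum U₁ ⊕ U₂ ⊕ U₃, and each Uᵢ is irreducible, i.e. the only W-invariant subspaces of Uᵢ are 0 and Uᵢ itself. -/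

import Mathlib

/-- The symmetric bilinear form of signature (1,6) on the lattice `Fin 7 → ℤ`,
modelling the Picard lattice of a smooth cubic surface. -/
def B (x y : Fin 7 → ℤ) : ℤ :=
  x 0 * y 0 - x 1 * y 1 - x 2 * y 2 - x 3 * y 3 - x 4 * y 4 - x 5 * y 5 - x 6 * y 6

/-- The canonical class `K = (-3,1,1,1,1,1,1)`. -/
def K : Fin 7 → ℤ := ![-3, 1, 1, 1, 1, 1, 1]

/-- A line is a vector `L` with `⟨L,L⟩ = -1` and `⟨L,K⟩ = -1`. -/
def IsLine (L : Fin 7 → ℤ) : Prop := B L L = -1 ∧ B L K = -1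

/-- The set of ℤ-linear automorphisms of the lattice preserving the form and fixing `K`:
the Weyl group of `E₆`. -/
def Wset : Set ((Fin 7 → ℤ) ≃ₗ[ℤ] (Fin 7 → ℤ)) :=
  {g | (∀ x y, B (g x) (g y) = B x y) ∧ g K = K}

/-- The ℚ-vector space of functions from the set of lines to ℚ. -/
abbrev Vq : Type := {L : Fin 7 → ℤ // IsLine L} → ℚ

/-- A subspace `U` of the space of ℚ-valued functions on the 27 lines is `W`-invariant if
for every `g ∈ W` and every `v ∈ U`, the function `g ⬝ v : L ↦ v (g⁻¹ L)` (characterized by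
`(g ⬝ v) (g L) = v L`) again belongs to `U`. -/
def IsWInvariant (U : Submodule ℚ Vq) : Prop :=
  ∀ g ∈ Wset, ∀ v ∈ U, ∀ w : Vq,
    (∀ L M : {L : Fin 7 → ℤ // IsLine L},
      g (L : Fin 7 → ℤ) = (M : Fin 7 → ℤ) → w M = v L) → w ∈ U

/-- The 27 lines: exceptional curves, lines through two points, conics through five points. -/
def lineVec : Fin 27 → Fin 7 → ℤ :=
  ![![0, 1, 0, 0, 0, 0, 0],
    ![0, 0, 1, 0, 0, 0, 0],
    ![0, 0, 0, 1, 0, 0, 0],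
    ![0, 0, 0, 0, 1, 0, 0],
    ![0, 0, 0, 0, 0, 1, 0],
    ![0, 0, 0, 0, 0, 0, 1],
    ![1, -1, -1, 0, 0, 0, 0],
    ![1, -1, 0, -1, 0, 0, 0],
    ![1, -1, 0, 0, -1, 0, 0],
    ![1, -1, 0, 0, 0, -1, 0],
    ![1, -1, 0, 0, 0, 0, -1],
    ![1, 0, -1, -1, 0, 0, 0],
    ![1, 0, -1, 0, -1, 0, 0],
    ![1, 0, -1, 0, 0, -1, 0],
    ![1, 0, -1, 0, 0, 0, -1],
    ![1, 0, 0, -1, -1, 0, 0],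
    ![1, 0, 0, -1, 0, -1, 0],
    ![1, 0, 0, -1, 0, 0, -1],
    ![1, 0, 0, 0, -1, -1, 0],
    ![1, 0, 0, 0, -1, 0, -1],
    ![1, 0, 0, 0, 0, -1, -1],
    ![2, 0, -1, -1, -1, -1, -1],
    ![2, -1, 0, -1, -1, -1, -1],
    ![2, -1, -1, 0, -1, -1, -1],
    ![2, -1, -1, -1, 0, -1, -1],
    ![2, -1, -1, -1, -1, 0, -1],
    ![2, -1, -1, -1, -1, -1, 0]]

/-- The type of lines. -/
abbrev Ln : Type := {L : Fin 7 → ℤ // IsLine L}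

theorem lineVec_isLine : ∀ i, IsLine (lineVec i) := by
  unfold IsLine
  decide +kernel

theorem lineVec_inj : Function.Injective lineVec := by
  unfold Function.Injective
  decide +kernel

theorem lineVec_table : ∀ (s : Bool) (a : Fin 3) (b₁ b₂ b₃ b₄ b₅ b₆ : Fin 2),
    (s = (a == 0)) →
    ((b₁ : ℕ) + b₂ + b₃ + b₄ + b₅ + b₆ = (if s then 1 else 3 * (a : ℕ) - 1 : ℕ)) →
    ∃ i, lineVec i = if s then ![(a : ℤ), b₁, b₂, b₃, b₄, b₅, b₆]
      else ![(a : ℤ), -b₁, -b₂, -b₃, -b₄, -b₅, -b₆] := by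
  decide +kernel

theorem lineVec_surj (L : Fin 7 → ℤ) (h : IsLine L) : ∃ i, lineVec i = L := by
  obtain ⟨h1, h2⟩ := h
  simp only [B, K] at h1 h2
  simp at h2
  have e : L = ![L 0, L 1, L 2, L 3, L 4, L 5, L 6] := by
    ext i; fin_cases i <;> rfl
  generalize L 0 = a at *
  generalize L 1 = b₁ at *
  generalize L 2 = b₂ at *
  generalize L 3 = b₃ at *
  generalize L 4 = b₄ at *
  generalize L 5 = b₅ at *
  generalize L 6 = b₆ at *
  subst e
  have ha : 3 * (a - 1) ^ 2 ≤ 8 := by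
    have hs : b₁ + b₂ + b₃ + b₄ + b₅ + b₆ = 1 - 3 * a := by linarith
    have hc : (b₁ + b₂ + b₃ + b₄ + b₅ + b₆) ^ 2 ≤
        6 * (b₁ ^ 2 + b₂ ^ 2 + b₃ ^ 2 + b₄ ^ 2 + b₅ ^ 2 + b₆ ^ 2) := by
      nlinarith [sq_nonneg (b₁ - b₂), sq_nonneg (b₁ - b₃), sq_nonneg (b₁ - b₄),
        sq_nonneg (b₁ - b₅), sq_nonneg (b₁ - b₆), sq_nonneg (b₂ - b₃), sq_nonneg (b₂ - b₄),
        sq_nonneg (b₂ - b₅), sq_nonneg (b₂ - b₆), sq_nonneg (b₃ - b₄), sq_nonneg (b₃ - b₅),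
        sq_nonneg (b₃ - b₆), sq_nonneg (b₄ - b₅), sq_nonneg (b₄ - b₆), sq_nonneg (b₅ - b₆)]
    rw [hs] at hc
    nlinarith
  have ha0 : 0 ≤ a := by nlinarith
  have ha2 : a ≤ 2 := by nlinarith
  -- each coordinate is 0 or ±1
  have key : ∀ b : ℤ, 0 ≤ b * b - b := fun b => by
    rcases le_or_gt b 0 with h | h <;> nlinarith
  have key' : ∀ b : ℤ, 0 ≤ b * b + b := fun b => by
    have := key (-b); linarith
  have fin : ∀ b : ℤ, b * b - b = 0 → ∃ c : Fin 2, b = c := fun b hb => by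
    have : b * (b - 1) = 0 := by linarith
    rcases mul_eq_zero.1 this with h | h
    · exact ⟨0, by simpa using h⟩
    · exact ⟨1, by simp; linarith⟩
  have fin' : ∀ b : ℤ, b * b + b = 0 → ∃ c : Fin 2, b = -c := fun b hb => by
    obtain ⟨c, hc⟩ := fin (-b) (by linarith)
    exact ⟨c, by linarith⟩
  by_cases h0 : a = 0
  · subst h0
    obtain ⟨c₁, rfl⟩ := fin b₁ (by linarith [key b₁, key b₂, key b₃, key b₄, key b₅, key b₆])
    obtain ⟨c₂, rfl⟩ := fin b₂ (by linarith [key c₁, key b₂, key b₃, key b₄, key b₅, key b₆])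
    obtain ⟨c₃, rfl⟩ := fin b₃ (by linarith [key c₁, key c₂, key b₃, key b₄, key b₅, key b₆])
    obtain ⟨c₄, rfl⟩ := fin b₄ (by linarith [key c₁, key c₂, key c₃, key b₄, key b₅, key b₆])
    obtain ⟨c₅, rfl⟩ := fin b₅ (by linarith [key c₁, key c₂, key c₃, key c₄, key b₅, key b₆])
    obtain ⟨c₆, rfl⟩ := fin b₆ (by linarith [key c₁, key c₂, key c₃, key c₄, key c₅, key b₆])
    obtain ⟨i, hi⟩ := lineVec_table true 0 c₁ c₂ c₃ c₄ c₅ c₆ rfl (by simp; omega)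
    exact ⟨i, by rw [hi]; simp⟩
  · have hq : (a - 1) * (a - 2) = 0 := by
      have : a = 1 ∨ a = 2 := by omega
      rcases this with rfl | rfl <;> rfl
    obtain ⟨c₁, rfl⟩ := fin' b₁
      (by linarith [key' b₁, key' b₂, key' b₃, key' b₄, key' b₅, key' b₆])
    obtain ⟨c₂, rfl⟩ := fin' b₂
      (by linarith [key' (-c₁), key' b₂, key' b₃, key' b₄, key' b₅, key' b₆])
    obtain ⟨c₃, rfl⟩ := fin' b₃
      (by linarith [key' (-c₁), key' (-c₂), key' b₃, key' b₄, key' b₅, key' b₆])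
    obtain ⟨c₄, rfl⟩ := fin' b₄
      (by linarith [key' (-c₁), key' (-c₂), key' (-c₃), key' b₄, key' b₅, key' b₆])
    obtain ⟨c₅, rfl⟩ := fin' b₅
      (by linarith [key' (-c₁), key' (-c₂), key' (-c₃), key' (-c₄), key' b₅, key' b₆])
    obtain ⟨c₆, rfl⟩ := fin' b₆
      (by linarith [key' (-c₁), key' (-c₂), key' (-c₃), key' (-c₄), key' (-c₅), key' b₆])
    have : a = 1 ∨ a = 2 := by omega
    rcases this with rfl | rfl
    · obtain ⟨i, hi⟩ := lineVec_table false 1 c₁ c₂ c₃ c₄ c₅ c₆ rfl (by simp; omega)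
      exact ⟨i, by rw [hi]; simp⟩
    · obtain ⟨i, hi⟩ := lineVec_table false 2 c₁ c₂ c₃ c₄ c₅ c₆ rfl (by simp; omega)
      exact ⟨i, by rw [hi]; simp⟩

/-- The enumeration of the lines. -/
noncomputable def lineEquiv : Fin 27 ≃ Ln :=
  Equiv.ofBijective (fun i => ⟨lineVec i, lineVec_isLine i⟩)
    ⟨fun _ _ h => lineVec_inj (congrArg Subtype.val h),
      fun L => (lineVec_surj L.1 L.2).imp fun _ hi => Subtype.ext hi⟩

@[simp] theorem lineEquiv_val (i : Fin 27) : (lineEquiv i).1 = lineVec i := rfl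

noncomputable instance : Fintype Ln := Fintype.ofEquiv _ lineEquiv

theorem card_Ln : Fintype.card Ln = 27 := by
  rw [← Fintype.card_congr lineEquiv]; simp

theorem B_comm (x y : Fin 7 → ℤ) : B x y = B y x := by unfold B; ring
theorem B_add_left (x y z : Fin 7 → ℤ) : B (x + y) z = B x z + B y z := by simp [B]; ring
theorem B_smul_left (c : ℤ) (x z : Fin 7 → ℤ) : B (c • x) z = c * B x z := by simp [B]; ring
theorem B_sub_left (x y z : Fin 7 → ℤ) : B (x - y) z = B x z - B y z := by simp [B]; ring
theorem B_add_right (x y z : Fin 7 → ℤ) : B z (x + y) = B z x + B z y := by simp [B]; ring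
theorem B_smul_right (c : ℤ) (x z : Fin 7 → ℤ) : B z (c • x) = c * B z x := by simp [B]; ring
theorem B_sub_right (x y z : Fin 7 → ℤ) : B z (x - y) = B z x - B z y := by simp [B]; ring

/-- The reflection in a vector of norm -2. -/
def reflW (r : Fin 7 → ℤ) (h : B r r = -2) : (Fin 7 → ℤ) ≃ₗ[ℤ] (Fin 7 → ℤ) :=
  LinearEquiv.ofInvolutive
    { toFun := fun x => x + B x r • r
      map_add' := fun x y => by rw [B_add_left, add_smul]; abel
      map_smul' := fun c x => by
        rw [B_smul_left, mul_smul, smul_add]; rfl }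
    (fun x => by
      change (x + B x r • r) + B (x + B x r • r) r • r = x
      rw [B_add_left, B_smul_left, h]
      module)

theorem reflW_apply (r : Fin 7 → ℤ) (h : B r r = -2) (x : Fin 7 → ℤ) :
    reflW r h x = x + B x r • r := rfl

theorem reflW_mem (r : Fin 7 → ℤ) (h : B r r = -2) (hK : B K r = 0) : reflW r h ∈ Wset := by
  refine ⟨fun x y => ?_, ?_⟩
  · rw [reflW_apply, reflW_apply]
    simp only [B_add_left, B_add_right, B_smul_left, B_smul_right, h]
    rw [B_comm r y]; ring
  · rw [reflW_apply, hK]; simp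

theorem Wset_line {g : (Fin 7 → ℤ) ≃ₗ[ℤ] (Fin 7 → ℤ)} (hg : g ∈ Wset) (L : Fin 7 → ℤ)
    (hL : IsLine L) : IsLine (g L) := by
  refine ⟨by rw [hg.1, hL.1], ?_⟩
  have := hg.1 L K
  rw [hg.2] at this
  rw [this, hL.2]

theorem Wset_symm {g : (Fin 7 → ℤ) ≃ₗ[ℤ] (Fin 7 → ℤ)} (hg : g ∈ Wset) : g.symm ∈ Wset := by
  refine ⟨fun x y => ?_, ?_⟩
  · rw [← hg.1]; simp
  · rw [LinearEquiv.symm_apply_eq, hg.2]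

/-- The permutations of the lines induced by `W`. -/
def WG : Subgroup (Equiv.Perm Ln) where
  carrier := {σ | ∃ g ∈ Wset, ∀ L : Ln, g L.1 = (σ L).1}
  one_mem' := ⟨LinearEquiv.refl ℤ _, ⟨fun _ _ => rfl, rfl⟩, fun _ => rfl⟩
  mul_mem' := by
    rintro σ τ ⟨g, hg, hσ⟩ ⟨k, hk, hτ⟩
    refine ⟨k.trans g, ⟨fun x y => ?_, ?_⟩, fun L => ?_⟩
    · simp [hg.1, hk.1]
    · simp [hg.2, hk.2]
    · simp [hσ, hτ]
  inv_mem' := by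
    rintro σ ⟨g, hg, hσ⟩
    refine ⟨g.symm, Wset_symm hg, fun L => ?_⟩
    rw [LinearEquiv.symm_apply_eq, hσ]; simp

theorem exists_perm {g : (Fin 7 → ℤ) ≃ₗ[ℤ] (Fin 7 → ℤ)} (hg : g ∈ Wset) :
    ∃ σ ∈ WG, ∀ L : Ln, g L.1 = (σ L).1 := by
  let σ : Equiv.Perm Ln :=
    { toFun := fun L => ⟨g L.1, Wset_line hg _ L.2⟩
      invFun := fun L => ⟨g.symm L.1, Wset_line (Wset_symm hg) _ L.2⟩
      left_inv := fun L => by simp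
      right_inv := fun L => by simp }
  exact ⟨σ, ⟨g, hg, fun _ => rfl⟩, fun _ => rfl⟩

theorem WG_B {σ : Equiv.Perm Ln} (hσ : σ ∈ WG) (L M : Ln) :
    B (σ L).1 (σ M).1 = B L.1 M.1 := by
  obtain ⟨g, hg, h⟩ := hσ
  rw [← h, ← h, hg.1]

theorem inv_comp {U : Submodule ℚ Vq} (hU : IsWInvariant U) {σ : Equiv.Perm Ln} (hσ : σ ∈ WG)
    {v : Vq} (hv : v ∈ U) : (fun L => v (σ L)) ∈ U := by
  obtain ⟨g, hg, h⟩ := WG.inv_mem hσ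
  refine hU g hg v hv _ fun L M hLM => ?_
  rw [h] at hLM
  rw [← Subtype.ext hLM]; simp

theorem inv_of_comp {U : Submodule ℚ Vq} (hU : ∀ σ ∈ WG, ∀ v ∈ U, (fun L => v (σ L)) ∈ U) :
    IsWInvariant U := by
  intro g hg v hv w hw
  obtain ⟨σ, hσ, h⟩ := exists_perm hg
  have := hU _ (WG.inv_mem hσ) v hv
  convert this using 1
  ext L
  refine hw _ _ ?_
  rw [h]; simp

/-- Two skew lines are exchanged by a reflection fixing all lines meeting them equally. -/
theorem skew_swap (L M : Ln) (h : B L.1 M.1 = 0) :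
    ∃ σ ∈ WG, σ L = M ∧ ∀ N : Ln, B N.1 L.1 = B N.1 M.1 → σ N = N := by
  have hr : B (L.1 - M.1) (L.1 - M.1) = -2 := by
    simp only [B_sub_left, B_sub_right, B_comm M.1 L.1, h, L.2.1, M.2.1]; rfl
  have hK : B K (L.1 - M.1) = 0 := by
    rw [B_comm, B_sub_left, L.2.2, M.2.2]; rfl
  obtain ⟨σ, hσ, hh⟩ := exists_perm (reflW_mem _ hr hK)
  refine ⟨σ, hσ, Subtype.ext ?_, fun N hN => Subtype.ext ?_⟩
  · rw [← hh, reflW_apply, B_sub_right, h, L.2.1]; simp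
  · rw [← hh, reflW_apply, B_sub_right, hN]; simp

/-- The base line. -/
noncomputable def L₀ : Ln := lineEquiv 5

theorem trans_table : ∀ i : Fin 27, i = 5 ∨ B (lineVec i) (lineVec 5) = 0 ∨
    ∃ k : Fin 27, B (lineVec i) (lineVec k) = 0 ∧ B (lineVec k) (lineVec 5) = 0 := by
  decide +kernel

theorem stab_table : ∀ i j : Fin 27, B (lineVec 5) (lineVec i) = B (lineVec 5) (lineVec j) →
    i = j ∨ B (lineVec i) (lineVec j) = 0 ∨
    ∃ k : Fin 27, B (lineVec 5) (lineVec k) = B (lineVec 5) (lineVec i) ∧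
      B (lineVec i) (lineVec k) = 0 ∧ B (lineVec k) (lineVec j) = 0 := by
  decide +kernel

theorem val_table : ∀ i : Fin 27, i = 5 ∨ B (lineVec 5) (lineVec i) = 0 ∨
    B (lineVec 5) (lineVec i) = 1 := by
  decide +kernel

theorem lineEquiv_five : lineEquiv 5 = L₀ := rfl

theorem WG_trans (L : Ln) : ∃ σ ∈ WG, σ L = L₀ := by
  obtain ⟨i, rfl⟩ := lineEquiv.surjective L
  rcases trans_table i with rfl | h | ⟨k, h1, h2⟩
  · exact ⟨1, WG.one_mem, by rw [Equiv.Perm.one_apply, lineEquiv_five]⟩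
  · obtain ⟨σ, hσ, h, -⟩ := skew_swap (lineEquiv i) L₀ h
    exact ⟨σ, hσ, h⟩
  · obtain ⟨σ, hσ, h, -⟩ := skew_swap (lineEquiv i) (lineEquiv k) h1
    obtain ⟨τ, hτ, h', -⟩ := skew_swap (lineEquiv k) L₀ h2
    exact ⟨τ * σ, WG.mul_mem hτ hσ, by simp [h, h']⟩

theorem WG_stab (L M : Ln) (e : B L₀.1 L.1 = B L₀.1 M.1) : ∃ σ ∈ WG, σ L₀ = L₀ ∧ σ L = M := by
  obtain ⟨i, rfl⟩ := lineEquiv.surjective L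
  obtain ⟨j, rfl⟩ := lineEquiv.surjective M
  rcases stab_table i j e with rfl | h | ⟨k, h0, h1, h2⟩
  · exact ⟨1, WG.one_mem, rfl, rfl⟩
  · obtain ⟨σ, hσ, h, h'⟩ := skew_swap (lineEquiv i) (lineEquiv j) h
    exact ⟨σ, hσ, h' _ e, h⟩
  · obtain ⟨σ, hσ, h, hf⟩ := skew_swap (lineEquiv i) (lineEquiv k) h1
    obtain ⟨τ, hτ, h', hf'⟩ := skew_swap (lineEquiv k) (lineEquiv j) h2
    refine ⟨τ * σ, WG.mul_mem hτ hσ, ?_, by simp [h, h']⟩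
    have h0' : B L₀.1 (lineEquiv k).1 = B L₀.1 (lineEquiv i).1 := h0
    have a1 : σ L₀ = L₀ := hf L₀ h0'.symm
    have a2 : τ L₀ = L₀ := hf' L₀ (h0'.trans e)
    rw [Equiv.Perm.mul_apply, a1, a2]

open Classical in
/-- A nonzero invariant subspace contains a function on lines depending only on the
intersection number with the base line, in normal form, together with its translates. -/
theorem exists_zonal {U : Submodule ℚ Vq} (hU : IsWInvariant U) (hne : U ≠ ⊥) :
    ∃ x y z : ℚ, x - y + z ≠ 0 ∧
      ∀ M : Ln, (fun N : Ln => x * (if N = M then 1 else 0) + y * (B M.1 N.1 : ℚ) + z) ∈ U := by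
  obtain ⟨v, hv, hv0⟩ := Submodule.exists_mem_ne_zero_of_ne_bot hne
  obtain ⟨L, hL⟩ := Function.ne_iff.1 hv0
  obtain ⟨σ, hσ, hσL⟩ := WG_trans L
  let G : Subgroup (Equiv.Perm Ln) := WG ⊓ MulAction.stabilizer _ L₀
  let v' : Vq := fun N => v (σ⁻¹ N)
  have hv' : v' ∈ U := inv_comp hU (WG.inv_mem hσ) hv
  have hv'0 : v' L₀ ≠ 0 := by
    change v (σ⁻¹ L₀) ≠ 0
    rw [← hσL]; simpa using hL
  let f : Vq := ∑ τ : G, fun N => v' (τ.1 N)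
  have hf : f ∈ U := U.sum_mem fun τ _ => inv_comp hU τ.2.1 hv'
  have fapp : ∀ N, f N = ∑ τ : G, v' (τ.1 N) := fun N => by simp [f]
  have hf0 : f L₀ ≠ 0 := by
    rw [fapp]
    have : ∀ τ : G, v' (τ.1 L₀) = v' L₀ := fun τ => congrArg v' τ.2.2
    simp only [this, Finset.sum_const, nsmul_eq_mul]
    refine mul_ne_zero ?_ hv'0
    simp
  have hfc : ∀ M N : Ln, B L₀.1 M.1 = B L₀.1 N.1 → f M = f N := by
    intro M N e
    obtain ⟨ρ, hρ, hρ0, hρM⟩ := WG_stab M N e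
    let r : G := ⟨ρ, hρ, hρ0⟩
    rw [fapp, fapp, ← Equiv.sum_comp (Equiv.mulRight r) (fun τ : G => v' (τ.1 M))]
    refine Finset.sum_congr rfl fun τ _ => ?_
    rw [← hρM]; rfl
  have hz : B L₀.1 (lineEquiv 0).1 = 0 := by
    change B (lineVec 5) (lineVec 0) = 0
    decide +kernel
  have ho : B L₀.1 (lineEquiv 26).1 = 0 + 1 ∨ B L₀.1 (lineEquiv 25).1 = 1 := by
    change B (lineVec 5) (lineVec 26) = 0 + 1 ∨ B (lineVec 5) (lineVec 25) = 1
    decide +kernel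
  have ho : ∃ P : Ln, B L₀.1 P.1 = 1 := by
    rcases ho with h | h
    · exact ⟨_, h⟩
    · exact ⟨_, h⟩
  obtain ⟨P, hP⟩ := ho
  set z := f (lineEquiv 0) with hzdef
  set y := f P - z with hy
  refine ⟨f L₀ + y - z, y, z, by convert hf0 using 1; ring, fun M => ?_⟩
  have hform : ∀ N, f N = (f L₀ + y - z) * (if N = L₀ then 1 else 0) +
      y * (B L₀.1 N.1 : ℚ) + z := by
    intro N
    by_cases hN : N = L₀
    · subst hN
      rw [L₀.2.1]; simp; ring
    · obtain ⟨i, rfl⟩ := lineEquiv.surjective N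
      rcases val_table i with rfl | h | h
      · exact absurd rfl hN
      · have h' : B L₀.1 (lineEquiv i).1 = 0 := h
        rw [if_neg hN, h', hfc _ _ (h'.trans hz.symm)]; simp [hzdef]
      · have h' : B L₀.1 (lineEquiv i).1 = 1 := h
        rw [if_neg hN, h', hfc _ _ (h'.trans hP.symm)]; simp [hy]
  obtain ⟨ρ, hρ, hρM⟩ := WG_trans M
  convert inv_comp hU hρ hf using 1
  ext N
  rw [hform (ρ N), ← hρM, WG_B hρ]
  simp only [EmbeddingLike.apply_eq_iff_eq]

/-- The evaluation map `u ↦ (L ↦ ⟨L, u⟩)`. -/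
def phi : (Fin 7 → ℚ) →ₗ[ℚ] Vq where
  toFun u L := L.1 0 * u 0 - L.1 1 * u 1 - L.1 2 * u 2 - L.1 3 * u 3 - L.1 4 * u 4
    - L.1 5 * u 5 - L.1 6 * u 6
  map_add' u v := by ext L; simp; ring
  map_smul' c u := by ext L; simp; ring

theorem phi_apply (u : Fin 7 → ℚ) (L : Ln) : phi u L =
    L.1 0 * u 0 - L.1 1 * u 1 - L.1 2 * u 2 - L.1 3 * u 3 - L.1 4 * u 4
    - L.1 5 * u 5 - L.1 6 * u 6 := rfl

/-- The map `v ↦ ∑ v(L) L`. -/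
noncomputable def psi : Vq →ₗ[ℚ] (Fin 7 → ℚ) where
  toFun v i := ∑ L : Ln, v L * (L.1 i : ℚ)
  map_add' u v := by ext i; simp [add_mul, Finset.sum_add_distrib]
  map_smul' c u := by ext i; simp [mul_assoc, Finset.mul_sum]

theorem psi_apply (v : Vq) (i : Fin 7) : psi v i = ∑ L : Ln, v L * (L.1 i : ℚ) := rfl

/-- The canonical class over ℚ. -/
def KQ : Fin 7 → ℚ := ![-3, 1, 1, 1, 1, 1, 1]

/-- Pairing with the canonical class. -/
def BK : (Fin 7 → ℚ) →ₗ[ℚ] ℚ where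
  toFun u := -3 * u 0 - u 1 - u 2 - u 3 - u 4 - u 5 - u 6
  map_add' u v := by simp; ring
  map_smul' c u := by simp; ring

theorem BK_apply (u : Fin 7 → ℚ) : BK u = -3 * u 0 - u 1 - u 2 - u 3 - u 4 - u 5 - u 6 := rfl

theorem BK_KQ : BK KQ = 3 := by rw [BK_apply]; simp [KQ]; norm_num

theorem phi_KQ : phi KQ = fun _ => -1 := by
  ext L
  have := L.2.2
  simp [B, K] at this
  have h : ((L.1 0 * (-3) - L.1 1 - L.1 2 - L.1 3 - L.1 4 - L.1 5 - L.1 6 : ℤ) : ℚ) = -1 := by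
    exact_mod_cast congrArg (Int.cast : ℤ → ℚ) (by linarith : L.1 0 * (-3) - L.1 1 - L.1 2 - L.1 3 - L.1 4 - L.1 5 - L.1 6 = -1)
  rw [phi_apply]
  push_cast at h
  simp [KQ]; linarith

theorem phi_psi (v : Vq) (N : Ln) : phi (psi v) N = ∑ M : Ln, (B N.1 M.1 : ℚ) * v M := by
  simp only [phi_apply, psi_apply, Finset.mul_sum, ← Finset.sum_sub_distrib]
  refine Finset.sum_congr rfl fun M _ => ?_
  simp only [B]; push_cast; ring

theorem sum_eq_BK (v : Vq) : ∑ M : Ln, v M = - BK (psi v) := by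
  simp only [BK_apply, psi_apply, Finset.mul_sum, ← Finset.sum_sub_distrib,
    ← Finset.sum_neg_distrib]
  refine Finset.sum_congr rfl fun M _ => ?_
  have := congrFun phi_KQ M
  rw [phi_apply] at this
  simp [KQ] at this
  linear_combination v M * this

theorem psi_phi (u : Fin 7 → ℚ) : psi (phi u) = (-6 : ℚ) • u + (5 * BK u) • KQ := by
  ext i
  rw [psi_apply, ← Equiv.sum_comp lineEquiv]
  simp only [phi_apply, lineEquiv_val, BK_apply, Pi.add_apply, Pi.smul_apply, smul_eq_mul]
  fin_cases i <;> simp [Fin.sum_univ_succ, lineVec, KQ] <;> ring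

theorem psi_phi_inj {u : Fin 7 → ℚ} (h : psi (phi u) = 0) : u = 0 := by
  rw [psi_phi] at h
  have h1 := congrArg BK h
  simp only [map_add, map_smul, BK_KQ, smul_eq_mul, map_zero] at h1
  have h2 : BK u = 0 := by linarith
  rw [h2] at h
  simpa using h

theorem phi_inj : Function.Injective phi := by
  rw [← LinearMap.ker_eq_bot, LinearMap.ker_eq_bot']
  intro u hu
  exact psi_phi_inj (by rw [hu, map_zero])

theorem psi_phi_surj (p : Fin 7 → ℚ) : ∃ u, psi (phi u) = p := by
  refine ⟨(-1 / 6 : ℚ) • p + (5 * BK p / 54) • KQ, ?_⟩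
  rw [psi_phi]
  simp only [map_add, map_smul, BK_KQ, smul_eq_mul]
  module

/-- The constants. -/
def V₁ : Submodule ℚ Vq := Submodule.span ℚ {fun _ => 1}
/-- The reflection representation. -/
def V₂ : Submodule ℚ Vq := (LinearMap.ker BK).map phi
/-- The linear relations among the lines. -/
noncomputable def V₃ : Submodule ℚ Vq := LinearMap.ker psi

theorem mem_V₁ {v : Vq} : v ∈ V₁ ↔ ∃ c : ℚ, v = fun _ => c := by
  rw [V₁, Submodule.mem_span_singleton]
  constructor
  · rintro ⟨c, rfl⟩; exact ⟨c, by ext; simp⟩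
  · rintro ⟨c, rfl⟩; exact ⟨c, by ext; simp⟩

theorem mem_V₂ {v : Vq} : v ∈ V₂ ↔ ∑ M : Ln, v M = 0 ∧
    ∀ N : Ln, ∑ M : Ln, (B N.1 M.1 : ℚ) * v M = -6 * v N := by
  rw [V₂, Submodule.mem_map]
  simp only [← phi_psi]
  rw [sum_eq_BK]
  constructor
  · rintro ⟨u, hu, rfl⟩
    rw [LinearMap.mem_ker] at hu
    rw [psi_phi, hu]
    simp [hu]
  · rintro ⟨h1, h2⟩
    refine ⟨(-1 / 6 : ℚ) • psi v, ?_, ?_⟩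
    · rw [LinearMap.mem_ker, map_smul, neg_eq_zero.1 h1, smul_zero]
    · ext N
      rw [map_smul, Pi.smul_apply, h2]; simp; ring

theorem mem_V₃ {v : Vq} : v ∈ V₃ ↔ ∀ N : Ln, ∑ M : Ln, (B N.1 M.1 : ℚ) * v M = 0 := by
  rw [V₃, LinearMap.mem_ker]
  simp only [← phi_psi]
  constructor
  · intro h N; rw [h]; simp
  · intro h
    exact phi_inj (by ext N; rw [h]; simp)

theorem V₃_sum {v : Vq} (h : v ∈ V₃) : ∑ M : Ln, v M = 0 := by
  rw [sum_eq_BK, LinearMap.mem_ker.1 h]; simp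

theorem inv_V₁ : IsWInvariant V₁ := inv_of_comp fun σ _ v hv => by
  rw [mem_V₁] at hv ⊢
  obtain ⟨c, rfl⟩ := hv
  exact ⟨c, rfl⟩

theorem comp_sum {σ : Equiv.Perm Ln} (hσ : σ ∈ WG) (v : Vq) (N : Ln) :
    ∑ M : Ln, (B N.1 M.1 : ℚ) * v (σ M) = ∑ M : Ln, (B (σ N).1 M.1 : ℚ) * v M := by
  rw [← Equiv.sum_comp σ (fun M => (B (σ N).1 M.1 : ℚ) * v M)]
  simp only [WG_B hσ]

theorem inv_V₂ : IsWInvariant V₂ := inv_of_comp fun σ hσ v hv => by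
  rw [mem_V₂] at hv ⊢
  refine ⟨?_, fun N => ?_⟩
  · rw [Equiv.sum_comp σ v, hv.1]
  · rw [comp_sum hσ, hv.2]

theorem inv_V₃ : IsWInvariant V₃ := inv_of_comp fun σ hσ v hv => by
  rw [mem_V₃] at hv ⊢
  intro N
  rw [comp_sum hσ, hv]

theorem indep {a b c : Vq} (ha : a ∈ V₁) (hb : b ∈ V₂) (hc : c ∈ V₃) (h : a + b + c = 0) :
    a = 0 ∧ b = 0 ∧ c = 0 := by
  obtain ⟨t, rfl⟩ := mem_V₁.1 ha
  obtain ⟨u, hu, rfl⟩ := Submodule.mem_map.1 hb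
  have e : (fun _ => t : Vq) = phi (-t • KQ) := by
    rw [map_smul, phi_KQ]; ext; simp
  rw [e] at h ⊢
  rw [LinearMap.mem_ker] at hu
  have h1 := congrArg psi h
  rw [← map_add, map_add, LinearMap.mem_ker.1 hc, add_zero, map_zero] at h1
  have h2 := psi_phi_inj h1
  have h3 := congrArg BK h2
  simp only [map_add, map_smul, BK_KQ, hu, smul_eq_mul, map_zero] at h3
  have ht : t = 0 := by linarith
  subst ht
  have hu0 : u = 0 := by simpa using h2
  subst hu0
  refine ⟨by simp, by simp, by simpa using h⟩

theorem sup_top : V₁ ⊔ V₂ ⊔ V₃ = ⊤ := by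
  rw [eq_top_iff]
  intro v _
  obtain ⟨u, hu⟩ := psi_phi_surj (psi v)
  have e : v = phi ((BK u / 3) • KQ) + phi (u - (BK u / 3) • KQ) + (v - phi u) := by
    rw [← map_add]
    simp
  rw [e]
  refine Submodule.add_mem_sup (Submodule.add_mem_sup ?_ ?_) ?_
  · rw [mem_V₁, map_smul, phi_KQ]
    exact ⟨BK u / 3 * -1, by ext; simp⟩
  · refine Submodule.mem_map_of_mem ?_
    rw [LinearMap.mem_ker]
    simp [BK_KQ]
  · rw [V₃, LinearMap.mem_ker, map_sub, hu, sub_self]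

theorem finrank_V₁ : Module.finrank ℚ V₁ = 1 := by
  refine finrank_span_singleton fun h => ?_
  simpa using congrFun h L₀

theorem finrank_V₂ : Module.finrank ℚ V₂ = 6 := by
  have h := LinearMap.finrank_range_add_finrank_ker BK
  have hs : LinearMap.range BK = ⊤ := LinearMap.range_eq_top.2 fun c =>
    ⟨(c / 3) • KQ, by rw [map_smul, BK_KQ]; simp⟩
  rw [hs, finrank_top] at h
  simp at h
  have := (Submodule.equivMapOfInjective phi phi_inj (LinearMap.ker BK)).finrank_eq
  rw [V₂, ← this]
  omega

theorem finrank_V₃ : Module.finrank ℚ V₃ = 20 := by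
  have h := LinearMap.finrank_range_add_finrank_ker psi
  have hs : LinearMap.range psi = ⊤ := LinearMap.range_eq_top.2 fun p =>
    (psi_phi_surj p).elim fun u hu => ⟨phi u, hu⟩
  have hd : Module.finrank ℚ Vq = 27 := by
    rw [Module.finrank_fintype_fun_eq_card, card_Ln]
  rw [hs, finrank_top, hd] at h
  simp at h
  rw [V₃]
  omega

theorem irr_V₁ (U : Submodule ℚ Vq) (h : U ≤ V₁) : U = ⊥ ∨ U = V₁ := by
  rw [or_iff_not_imp_left]
  intro hne
  refine le_antisymm h ?_
  obtain ⟨v, hv, hv0⟩ := Submodule.exists_mem_ne_zero_of_ne_bot hne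
  obtain ⟨c, rfl⟩ := mem_V₁.1 (h hv)
  have hc : c ≠ 0 := fun hc => hv0 (by subst hc; rfl)
  intro w hw
  obtain ⟨d, rfl⟩ := mem_V₁.1 hw
  convert U.smul_mem (d / c) hv using 1
  ext; simp [hc]

open Classical in
/-- Convolution of a function with the translates of a zonal function. -/
theorem zonal_conv {U : Submodule ℚ Vq} {x y z : ℚ}
    (h : ∀ M : Ln, (fun N : Ln => x * (if N = M then 1 else 0) + y * (B M.1 N.1 : ℚ) + z) ∈ U)
    (w : Vq) (hw : ∑ M : Ln, w M = 0) :
    (fun N : Ln => x * w N + y * ∑ M : Ln, (B N.1 M.1 : ℚ) * w M) ∈ U := by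
  have := U.sum_mem (t := Finset.univ) fun M _ => U.smul_mem (w M) (h M)
  convert this using 1
  ext N
  simp only [Finset.sum_apply, Pi.smul_apply, smul_eq_mul, mul_add, Finset.sum_add_distrib]
  rw [← Finset.sum_mul, hw, zero_mul, add_zero, Finset.mul_sum]
  congr 1
  · simp [mul_comm]
  · refine Finset.sum_congr rfl fun M _ => ?_
    rw [B_comm]; ring

/-- The affine function `y ⟨L₀, ·⟩ + z` as a value of `phi`. -/
theorem affine_eq (y z : ℚ) : ∃ u, ∀ N : Ln, phi u N = y * (B L₀.1 N.1 : ℚ) + z := by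
  refine ⟨y • (fun i => (L₀.1 i : ℚ)) - z • KQ, fun N => ?_⟩
  rw [map_sub, map_smul, map_smul, phi_KQ, B_comm]
  simp only [Pi.sub_apply, Pi.smul_apply, phi_apply, B, smul_eq_mul]
  push_cast; ring

theorem irr_V₃ (U : Submodule ℚ Vq) (h : U ≤ V₃) (hU : IsWInvariant U) : U = ⊥ ∨ U = V₃ := by
  rw [or_iff_not_imp_left]
  intro hne
  refine le_antisymm h fun w hw => ?_
  obtain ⟨x, y, z, h0, hf⟩ := exists_zonal hU hne
  have hx : x ≠ 0 := by
    rintro rfl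
    obtain ⟨u, hu⟩ := affine_eq y z
    have h1 := h (hf L₀)
    have e : (fun N : Ln => phi u N) ∈ V₃ := by
      convert h1 using 1
      ext N; rw [hu]; simp
    have := psi_phi_inj (LinearMap.mem_ker.1 e)
    have h2 := hu L₀
    rw [this, L₀.2.1] at h2
    simp at h2
    exact h0 (by linarith)
  have := zonal_conv hf w (V₃_sum hw)
  convert U.smul_mem x⁻¹ this using 1
  ext N
  simp [mem_V₃.1 hw, hx]

theorem irr_V₂ (U : Submodule ℚ Vq) (h : U ≤ V₂) (hU : IsWInvariant U) : U = ⊥ ∨ U = V₂ := by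
  rw [or_iff_not_imp_left]
  intro hne
  refine le_antisymm h fun w hw => ?_
  obtain ⟨x, y, z, h0, hf⟩ := exists_zonal hU hne
  have hx : x = 0 := by
    obtain ⟨u, hu⟩ := affine_eq y z
    obtain ⟨u', -, hu'⟩ := Submodule.mem_map.1 (h (hf L₀))
    have e : ∀ i : Fin 27, phi (u' - u) (lineEquiv i) = x * (if i = 5 then 1 else 0) := by
      intro i
      rw [map_sub, Pi.sub_apply, hu', hu]
      simp [L₀]
    simp only [phi_apply, lineEquiv_val] at e
    generalize u' - u = t at e
    have e0 := e 0
    have e1 := e 1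
    have e2 := e 2
    have e3 := e 3
    have e4 := e 4
    have e5 := e 5
    have e6 := e 6
    have e7 := e 10
    simp [lineVec] at e0 e1 e2 e3 e4 e5 e6 e7
    linarith
  subst hx
  have hy : y ≠ 0 := by
    rintro rfl
    have h1 := (mem_V₂.1 (h (hf L₀))).1
    simp [card_Ln] at h1
    exact h0 (by simp [h1])
  have hw' := mem_V₂.1 hw
  have := zonal_conv hf w hw'.1
  convert U.smul_mem (-6 * y)⁻¹ this using 1
  ext N
  simp [hw'.2]
  field_simp

/-- The permutation representation of the Weyl group `W(E₆)` on the 27 lines decomposes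
into a direct sum of irreducible representations of dimensions 1, 6 and 20. -/
theorem perm_rep_decomposition :
    (∀ g ∈ Wset, ∀ L : Fin 7 → ℤ, IsLine L → IsLine (g L)) ∧
    ∃ U₁ U₂ U₃ : Submodule ℚ Vq,
      IsWInvariant U₁ ∧ IsWInvariant U₂ ∧ IsWInvariant U₃ ∧
      Module.finrank ℚ ↥U₁ = 1 ∧ Module.finrank ℚ ↥U₂ = 6 ∧ Module.finrank ℚ ↥U₃ = 20 ∧
      U₁ ⊔ U₂ ⊔ U₃ = ⊤ ∧
      U₁ ⊓ (U₂ ⊔ U₃) = ⊥ ∧ U₂ ⊓ (U₁ ⊔ U₃) = ⊥ ∧ U₃ ⊓ (U₁ ⊔ U₂) = ⊥ ∧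
      (∀ U ≤ U₁, IsWInvariant U → U = ⊥ ∨ U = U₁) ∧
      (∀ U ≤ U₂, IsWInvariant U → U = ⊥ ∨ U = U₂) ∧
      (∀ U ≤ U₃, IsWInvariant U → U = ⊥ ∨ U = U₃) := by
  refine ⟨fun g hg L hL => Wset_line hg L hL, V₁, V₂, V₃, inv_V₁, inv_V₂, inv_V₃, finrank_V₁,
    finrank_V₂, finrank_V₃, sup_top, ?_, ?_, ?_, fun U h _ => irr_V₁ U h, irr_V₂, irr_V₃⟩
  · rw [Submodule.eq_bot_iff]
    rintro v ⟨h1, h2⟩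
    obtain ⟨b, hb, c, hc, rfl⟩ := Submodule.mem_sup.1 h2
    exact neg_eq_zero.1 (indep (V₁.neg_mem h1) hb hc (by abel)).1
  · rw [Submodule.eq_bot_iff]
    rintro v ⟨h1, h2⟩
    obtain ⟨a, ha, c, hc, rfl⟩ := Submodule.mem_sup.1 h2
    exact neg_eq_zero.1 (indep ha (V₂.neg_mem h1) hc (by abel)).2.1
  · rw [Submodule.eq_bot_iff]
    rintro v ⟨h1, h2⟩
    obtain ⟨a, ha, b, hb, rfl⟩ := Submodule.mem_sup.1 h2
    exact neg_eq_zero.1 (indep ha hb (V₃.neg_mem h1) (by abel)).2.2
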